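/- arXiv:1710.03259 — 3 statements merged into one kernel-verified Lean document; each statement's English description precedes it below -/
import Mathlib

section
/- Let E be a real Banach space in which every vector has a unique norming functional, denoted J(v), and suppose E has the Opial-type duality property. Let (S_n) be a sequence of invertible linear isometries of E and let P : E → E be a continuous linear idempotent (P ∘ P = P) such that S_n → P and S_n⁻¹ → P in the weak operator topology. Then every v ∈ ker P is Birkhoff–James orthogonal to every w ∈ range P, and ‖(I − P)x‖ ≤ ‖x‖ for every x ∈ E; in particular, if P ≠ I then the operator norm of I − P equals 1. -/
open Filter Topology

/-- If `E` has unique norming functionals `J`, satisfies the Opial-type duality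
property, and a sequence of invertible isometries `S n` together with its
inverses converges in the weak operator topology to an idempotent `P`, then
`ker P` is Birkhoff–James orthogonal to `range P`, `I - P` is a contraction,
and if `P ≠ I` then `‖I - P‖ = 1`. -/
theorem complement_projection_norm_one
    {E : Type*} [NormedAddCommGroup E] [NormedSpace ℝ E] [CompleteSpace E]
    (J : E → (E →L[ℝ] ℝ))
    (hJ : ∀ v : E, ‖J v‖ = ‖v‖ ∧ J v v = ‖v‖ ^ 2)
    (hJuniq : ∀ (v : E) (f : E →L[ℝ] ℝ), ‖f‖ = ‖v‖ → f v = ‖v‖ ^ 2 → f = J v)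
    (hOpial : ∀ x : ℕ → E,
      (∀ f : E →L[ℝ] ℝ, Tendsto (fun n => f (x n)) atTop (𝓝 0)) →
      ∀ v : E, Tendsto (fun n => J (x n) v) atTop (𝓝 0))
    (S : ℕ → (E ≃ₗᵢ[ℝ] E))
    (P : E →L[ℝ] E) (hP : P.comp P = P)
    (hWOT : ∀ (v : E) (f : E →L[ℝ] ℝ),
      Tendsto (fun n => f (S n v)) atTop (𝓝 (f (P v))))
    (hWOTinv : ∀ (v : E) (f : E →L[ℝ] ℝ),
      Tendsto (fun n => f ((S n).symm v)) atTop (𝓝 (f (P v)))) :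
    (∀ v w : E, P v = 0 → (∃ u, P u = w) → ∀ lam : ℝ, ‖v‖ ≤ ‖v + lam • w‖) ∧
    (∀ x : E, ‖x - P x‖ ≤ ‖x‖) ∧
    (P ≠ ContinuousLinearMap.id ℝ E → ‖ContinuousLinearMap.id ℝ E - P‖ = 1) := by
  have hPP : ∀ x, P (P x) = P x := fun x => by
    have := congrArg (fun T : E →L[ℝ] E => T x) hP
    simpa using this
  have key : ∀ v u : E, P v = 0 → J v (P u) = 0 := by
    intro v u hv
    have h1 : Tendsto (fun n => J (S n v) u) atTop (𝓝 0) := by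
      apply hOpial (fun n => S n v)
      intro f
      have := hWOT v f
      rwa [hv, map_zero] at this
    have h2 : ∀ n, J (S n v) u = J v ((S n).symm u) := by
      intro n
      have h3 : (J v).comp ((S n).symm.toContinuousLinearEquiv : E →L[ℝ] E) = J (S n v) := by
        apply hJuniq
        · rw [(S n).norm_map, ← (hJ v).1]
          exact ContinuousLinearMap.opNorm_comp_linearIsometryEquiv (J v) (S n).symm
        · simpa using (hJ v).2
      rw [← h3]
      simp
    simp only [h2] at h1
    exact tendsto_nhds_unique (hWOTinv u (J v)) h1
  have part1 : ∀ v w : E, P v = 0 → (∃ u, P u = w) → ∀ lam : ℝ, ‖v‖ ≤ ‖v + lam • w‖ := by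
    rintro v w hv ⟨u, rfl⟩ lam
    by_cases h0 : ‖v‖ = 0
    · rw [h0]; exact norm_nonneg _
    have hpos : 0 < ‖v‖ := lt_of_le_of_ne (norm_nonneg _) (Ne.symm h0)
    have h1 : J v (v + lam • P u) = ‖v‖ ^ 2 := by
      rw [map_add, map_smul, key v u hv, (hJ v).2]; simp
    have h2 := (J v).le_opNorm (v + lam • P u)
    rw [h1, (hJ v).1, Real.norm_eq_abs, abs_of_nonneg (sq_nonneg _), sq] at h2
    exact le_of_mul_le_mul_left h2 hpos
  have part2 : ∀ x : E, ‖x - P x‖ ≤ ‖x‖ := by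
    intro x
    have := part1 (x - P x) (P x) (by rw [map_sub, hPP, sub_self]) ⟨x, rfl⟩ 1
    simpa using this
  refine ⟨part1, part2, fun hne => le_antisymm ?_ ?_⟩
  · refine ContinuousLinearMap.opNorm_le_bound _ zero_le_one fun x => ?_
    simpa using part2 x
  · obtain ⟨x, hx⟩ : ∃ x, P x ≠ x := by
      by_contra! h
      exact hne (ContinuousLinearMap.ext fun x => by simpa using h x)
    have hpos : 0 < ‖x - P x‖ := norm_pos_iff.2 (sub_ne_zero.2 hx.symm)
    have h := (ContinuousLinearMap.id ℝ E - P).le_opNorm (x - P x)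
    have h2 : (ContinuousLinearMap.id ℝ E - P) (x - P x) = x - P x := by
      simp [hPP]
    rw [h2] at h
    exact le_of_mul_le_mul_right (by simpa using h) hpos
end

section
/- Let E be a real Banach space in which every vector has a unique norming functional, denoted J(v), and suppose E has the Opial-type duality property. Let (S_n) be a sequence of invertible linear isometries of E and let P : E → E be a continuous linear idempotent such that S_n → P and S_n⁻¹ → P in the weak operator topology. Then for every v ∈ ker P and every w ∈ range P one has (J v)(w) = 0. -/
open Filter Topology

/-- Under the same hypotheses as the main theorem, the norming functional of any
vector `v ∈ ker P` vanishes on all of `range P`. -/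
theorem norming_functional_vanishes_on_invariants
    {E : Type*} [NormedAddCommGroup E] [NormedSpace ℝ E] [CompleteSpace E]
    (J : E → (E →L[ℝ] ℝ))
    (hJ : ∀ v : E, ‖J v‖ = ‖v‖ ∧ J v v = ‖v‖ ^ 2)
    (hJuniq : ∀ (v : E) (f : E →L[ℝ] ℝ), ‖f‖ = ‖v‖ → f v = ‖v‖ ^ 2 → f = J v)
    (hOpial : ∀ x : ℕ → E,
      (∀ f : E →L[ℝ] ℝ, Tendsto (fun n => f (x n)) atTop (𝓝 0)) →
      ∀ v : E, Tendsto (fun n => J (x n) v) atTop (𝓝 0))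
    (S : ℕ → (E ≃ₗᵢ[ℝ] E))
    (P : E →L[ℝ] E) (hP : P.comp P = P)
    (hWOT : ∀ (v : E) (f : E →L[ℝ] ℝ),
      Tendsto (fun n => f (S n v)) atTop (𝓝 (f (P v))))
    (hWOTinv : ∀ (v : E) (f : E →L[ℝ] ℝ),
      Tendsto (fun n => f ((S n).symm v)) atTop (𝓝 (f (P v)))) :
    ∀ v w : E, P v = 0 → (∃ u, P u = w) → J v w = 0 := by
  rintro v w hv ⟨u, rfl⟩
  have key : ∀ n, J (S n v) u = J v ((S n).symm u) := by
    intro n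
    have h := hJuniq (S n v)
      ((J v).comp ((S n).symm.toContinuousLinearEquiv : E →L[ℝ] E)) ?_ ?_
    · rw [← h]; rfl
    · rw [(S n).norm_map, ← (hJ v).1]
      apply le_antisymm
      · refine ContinuousLinearMap.opNorm_le_bound _ (norm_nonneg _) fun x => ?_
        have := (J v).le_opNorm ((S n).symm x)
        rwa [(S n).symm.norm_map] at this
      · refine ContinuousLinearMap.opNorm_le_bound _ (norm_nonneg _) fun x => ?_
        have := ((J v).comp
          ((S n).symm.toContinuousLinearEquiv : E →L[ℝ] E)).le_opNorm (S n x)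
        simpa using this
    · rw [(S n).norm_map, ← (hJ v).2]
      simp
  have h0 := hOpial (fun n => S n v) (fun f => by simpa [hv] using hWOT v f) u
  simp only [key] at h0
  exact tendsto_nhds_unique (hWOTinv u (J v)) h0
end

section
/- For every ε > 0 there exist n ∈ ℕ and p ∈ [1, ∞) such that on ℝⁿ (functions Fin n → ℝ) equipped with the ℓ_p norm ‖f‖_p = (∑_i |f(i)|^p)^{1/p}, the mean projection M given by (M f)(i) = (1/n) ∑_j f(j) satisfies: there is a vector f with ‖f − M f‖_p > (2 − ε) ‖f‖_p; in particular the operator norm of I − M on ℓ_p(Fin n) exceeds 2 − ε. -/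
open scoped ENNReal

/-- The norm of the complement of the mean projection on `ℓ_p(Fin n)` can be
made arbitrarily close to `2` by choosing `n` and `p < ∞` large. -/
theorem complement_of_mean_projection_norm_close_to_two :
    ∀ ε : ℝ, 0 < ε →
      ∃ (n : ℕ) (p : ℝ≥0∞) (_ : Fact (1 ≤ p)), p ≠ ∞ ∧
        (∀ f : PiLp p (fun _ : Fin n => ℝ),
          ‖f‖ = (∑ i, |f i| ^ p.toReal) ^ (1 / p.toReal)) ∧
        ∃ M : PiLp p (fun _ : Fin n => ℝ) →L[ℝ] PiLp p (fun _ : Fin n => ℝ),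
          (∀ (f : PiLp p (fun _ : Fin n => ℝ)) (i : Fin n),
            M f i = (∑ j, f j) / n) ∧
          (∃ f : PiLp p (fun _ : Fin n => ℝ),
            ‖f - M f‖ > (2 - ε) * ‖f‖) ∧
          ‖ContinuousLinearMap.id ℝ (PiLp p (fun _ : Fin n => ℝ)) - M‖ > 2 - ε := by
  intro ε hε
  obtain ⟨m, hm⟩ := exists_nat_one_div_lt (half_pos hε)
  have hnorm : ∀ f : PiLp 1 (fun _ : Fin (m + 1) => ℝ), ‖f‖ = ∑ i, |f i| := by
    intro f
    rw [PiLp.norm_eq_sum (by simp)]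
    simp
  let L : PiLp 1 (fun _ : Fin (m + 1) => ℝ) →ₗ[ℝ] PiLp 1 (fun _ : Fin (m + 1) => ℝ) :=
    { toFun := fun f => WithLp.toLp 1 (fun _ => (∑ j, f j) / ((m + 1 : ℕ) : ℝ))
      map_add' := by
        intro f g
        ext i
        simp [Finset.sum_add_distrib, add_div]
      map_smul' := by
        intro c f
        ext i
        simp [← Finset.mul_sum, mul_div_assoc] }
  let M := LinearMap.toContinuousLinearMap L
  have hM : ∀ (f : PiLp 1 (fun _ : Fin (m + 1) => ℝ)) (i : Fin (m + 1)),
      M f i = (∑ j, f j) / ((m + 1 : ℕ) : ℝ) := fun f i => rfl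
  let f : PiLp 1 (fun _ : Fin (m + 1) => ℝ) := WithLp.toLp 1 (Pi.single 0 1)
  have hf0 : f 0 = 1 := by simp [f]
  have hfs : ∀ i : Fin m, f i.succ = 0 := by intro i; simp [f]
  have hf : ‖f‖ = 1 := by
    rw [hnorm, Fin.sum_univ_succ]
    simp [hf0, hfs]
  have hmpos : (0 : ℝ) < m + 1 := by positivity
  have hfM : ‖f - M f‖ = 2 - 2 * (1 / ((m : ℝ) + 1)) := by
    have hs : ∑ j, f j = 1 := by
      rw [Fin.sum_univ_succ]
      simp [hf0, hfs]
    have h1 : (0 : ℝ) ≤ 1 - 1 / ((m : ℝ) + 1) := by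
      have : 1 / ((m : ℝ) + 1) ≤ 1 := by
        rw [div_le_one hmpos]
        have := Nat.cast_nonneg (α := ℝ) m
        linarith
      linarith
    rw [hnorm, Fin.sum_univ_succ]
    simp only [PiLp.sub_apply, hM, hs, hf0, hfs, zero_sub, abs_neg, Finset.sum_const,
      Finset.card_univ, Fintype.card_fin, nsmul_eq_mul, Nat.cast_add, Nat.cast_one]
    rw [abs_of_nonneg h1, abs_of_pos (by positivity)]
    field_simp
    ring
  have hgt : ‖f - M f‖ > (2 - ε) := by
    rw [hfM]
    linarith
  refine ⟨m + 1, 1, inferInstance, by simp, ?_, M, hM, ⟨f, ?_⟩, ?_⟩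
  · intro g
    rw [hnorm]
    simp
  · rw [hf, mul_one]
    exact hgt
  · have h := (ContinuousLinearMap.id ℝ (PiLp 1 (fun _ : Fin (m + 1) => ℝ)) - M).le_opNorm f
    rw [hf, mul_one] at h
    exact lt_of_lt_of_le hgt h
end
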